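/- arXiv:2008.09959 — 4 statements merged into one kernel-verified Lean document; each statement's English description precedes it below -/
import Mathlib

section
/- Let r > 0 and μ > 0 be real numbers with r ≠ μ. The function φ_F(a) = 1 − (μ³/((r−μ)²(r+μ)))·exp(−r·a) − (r/(2(r−μ)²(r+μ)))·exp(−μ·a)·(μ²·a²·(r−μ)² + 2rμ(r−μ)·a + 2(r² − rμ − μ²)) is monotone nondecreasing on [0, ∞), and φ_F(0) = 0. -/
noncomputable def PhiF (r μ a : ℝ) : ℝ :=
  (μ / (r - μ))^2 * r *
    (Real.exp (-r * a) - Real.exp (-μ * a) + (r - μ) * a * Real.exp (-μ * a)) *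
    (μ / (r + μ)) +
  (1/2) * a^2 * μ^3 * Real.exp (-μ * a) * (r / (r + μ))

noncomputable def phiF (r μ a : ℝ) : ℝ :=
  1 - (μ^3 / ((r - μ)^2 * (r + μ))) * Real.exp (-r * a) -
    (r / (2 * (r - μ)^2 * (r + μ))) * Real.exp (-μ * a) *
      (μ^2 * a^2 * (r - μ)^2 + 2 * r * μ * (r - μ) * a + 2 * (r^2 - r * μ - μ^2))

noncomputable def PhiL (r μ a : ℝ) : ℝ :=
  ((r * (r + μ) * a - (2 * μ^3 - r^3 - r^2 * μ) / (μ * (r - μ))) * Real.exp (-(r + μ) * a) +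
    ((r * μ + 2 * μ^2) / (r - μ)) * Real.exp (-μ * a) -
    ((r * μ * (r + μ) + r^3) / (μ * (r - μ))) * Real.exp (-r * a)) * (μ / (r + μ)) +
  (μ^2 / r^2) *
    (Real.exp (-(r + μ) * a) * (3 * μ + 2 * r + r * (r + μ) * a) -
      Real.exp (-μ * a) * (3 * μ + 2 * r - r * (r + 2 * μ) * a)) * (r / (r + μ))

theorem phiF_hasDerivAt (r μ a : ℝ) (hr : 0 < r) (hμ : 0 < μ) (hne : r ≠ μ) :
    HasDerivAt (phiF r μ) (PhiF r μ a) a := by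
  have hd : r - μ ≠ 0 := sub_ne_zero.mpr hne
  have hs : r + μ ≠ 0 := by positivity
  have h1 : HasDerivAt (fun a : ℝ => Real.exp (-r * a)) (Real.exp (-r * a) * (-r * 1)) a :=
    ((hasDerivAt_id a).const_mul (-r)).exp
  have h2 : HasDerivAt (fun a : ℝ => Real.exp (-μ * a)) (Real.exp (-μ * a) * (-μ * 1)) a :=
    ((hasDerivAt_id a).const_mul (-μ)).exp
  have h3 : HasDerivAt (fun a : ℝ => μ^2 * a^2 * (r - μ)^2 + 2 * r * μ * (r - μ) * a
      + 2 * (r^2 - r * μ - μ^2)) (μ^2 * (2 * a) * (r - μ)^2 + 2 * r * μ * (r - μ) * 1) a := by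
    have hq : HasDerivAt (fun a : ℝ => a^2) (2 * a) a := by
      simpa using hasDerivAt_pow 2 a
    exact (((hq.const_mul (μ^2)).mul_const ((r - μ)^2)).add
      ((hasDerivAt_id a).const_mul (2 * r * μ * (r - μ)))).add_const _
  have h4 := ((h1.const_mul (μ^3 / ((r - μ)^2 * (r + μ)))).const_sub 1).sub
    ((h2.const_mul (r / (2 * (r - μ)^2 * (r + μ)))).mul h3)
  refine HasDerivAt.congr_deriv (f := phiF r μ) h4 ?_
  unfold PhiF
  generalize Real.exp (-r * a) = x
  generalize Real.exp (-μ * a) = y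
  field_simp
  ring

theorem PhiF_nonneg (r μ a : ℝ) (hr : 0 < r) (hμ : 0 < μ) : 0 ≤ PhiF r μ a := by
  have h : 0 ≤ Real.exp (-r * a) - Real.exp (-μ * a) + (r - μ) * a * Real.exp (-μ * a) := by
    have h1 := Real.add_one_le_exp (-(r - μ) * a)
    have h2 : Real.exp (-r * a) = Real.exp (-(r - μ) * a) * Real.exp (-μ * a) := by
      rw [← Real.exp_add]; congr 1; ring
    rw [h2]
    nlinarith [Real.exp_pos (-μ * a)]
  unfold PhiF
  have h3 : 0 ≤ μ / (r + μ) := by positivity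
  refine add_nonneg (mul_nonneg (mul_nonneg (by positivity) h) h3) (by positivity)

theorem phiF_monotone_and_zero (r μ : ℝ) (hr : 0 < r) (hμ : 0 < μ) (hne : r ≠ μ) :
    MonotoneOn (phiF r μ) (Set.Ici 0) ∧ phiF r μ 0 = 0 := by
  constructor
  · refine (monotone_of_hasDerivAt_nonneg (f' := PhiF r μ)
      (fun a => phiF_hasDerivAt r μ a hr hμ hne)
      (fun a => PhiF_nonneg r μ a hr hμ)).monotoneOn _
  · have hd : r - μ ≠ 0 := sub_ne_zero.mpr hne
    have hs : r + μ ≠ 0 := by positivity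
    simp only [phiF, mul_zero, Real.exp_zero]
    field_simp
    ring
end

section
/- Let r > 0 and μ > 0 be real numbers with r ≠ μ. The mean of the FCFS M/M/1/2 peak-age-of-information density equals the average peak AoI per queue given in the paper: ∫₀^∞ a · Φ_F(a) da = 1/r + 3/μ − 2/(r+μ). -/
theorem pow_exp_aux (n : ℕ) (b : ℝ) (hb : 0 < b) :
    MeasureTheory.IntegrableOn (fun a : ℝ => a ^ n * Real.exp (-b * a)) (Set.Ioi 0) ∧
    ∫ a in Set.Ioi (0:ℝ), a ^ n * Real.exp (-b * a) = (n.factorial : ℝ) / b ^ (n + 1) := by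
  constructor
  · have h := integrableOn_rpow_mul_exp_neg_mul_rpow (p := 1) (s := (n : ℝ)) (b := b)
      (by have : (0:ℝ) ≤ n := Nat.cast_nonneg n
          linarith) one_pos hb
    simpa using h
  · have h := Real.integral_rpow_mul_exp_neg_mul_Ioi (a := (n : ℝ) + 1) (r := b)
      (by positivity) hb
    rw [Real.Gamma_nat_eq_factorial] at h
    have e : (1 / b) ^ ((n : ℝ) + 1) = (1 / b) ^ (n + 1) := by
      rw [← Real.rpow_natCast]; push_cast; rfl
    rw [e] at h
    simp only [add_sub_cancel_right, Real.rpow_natCast, ← neg_mul] at h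
    rw [h, one_div, inv_pow]
    ring

theorem PhiF_mean (r μ : ℝ) (hr : 0 < r) (hμ : 0 < μ) (hne : r ≠ μ) :
    ∫ a in Set.Ioi (0:ℝ), a * PhiF r μ a = 1/r + 3/μ - 2/(r + μ) := by
  obtain ⟨i1, e1⟩ := pow_exp_aux 1 r hr
  obtain ⟨i2, e2⟩ := pow_exp_aux 1 μ hμ
  obtain ⟨i3, e3⟩ := pow_exp_aux 2 μ hμ
  obtain ⟨i4, e4⟩ := pow_exp_aux 3 μ hμ
  have hd : r - μ ≠ 0 := sub_ne_zero.mpr hne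
  have hs : r + μ ≠ 0 := by positivity
  set C : ℝ := (μ / (r - μ))^2 * r * (μ / (r + μ)) with hC
  set D : ℝ := (1/2) * μ^3 * (r / (r + μ)) with hD
  have hf : ∀ a : ℝ, a * PhiF r μ a =
      ((C * (a ^ 1 * Real.exp (-r * a)) - C * (a ^ 1 * Real.exp (-μ * a))) +
        (C * (r - μ)) * (a ^ 2 * Real.exp (-μ * a))) + D * (a ^ 3 * Real.exp (-μ * a)) := by
    intro a
    rw [PhiF, hC, hD]
    ring
  simp_rw [hf]
  have j1 := i1.const_mul C
  have j2 := i2.const_mul C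
  have j3 := i3.const_mul (C * (r - μ))
  have j4 := i4.const_mul D
  rw [MeasureTheory.integral_add (by exact (j1.sub j2).add j3) j4,
    MeasureTheory.integral_add (by exact j1.sub j2) j3, MeasureTheory.integral_sub j1 j2]
  simp only [MeasureTheory.integral_const_mul]
  rw [e1, e2, e3, e4, hC, hD]
  simp only [Nat.factorial]
  push_cast
  field_simp
  ring
end

section
/- Let r > 0 and μ > 0 be real numbers with r ≠ μ. The preemptive LCFS M/M/1/2* peak-age-of-information density Φ_L is nonnegative on [0, ∞): for every a ≥ 0, Φ_L(a) ≥ 0. -/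
theorem mono_aux (f f' : ℝ → ℝ) (hf : ∀ x, HasDerivAt f (f' x) x)
    (h0 : f 0 = 0) (hn : ∀ x, 0 ≤ x → 0 ≤ f' x) (a : ℝ) (ha : 0 ≤ a) : 0 ≤ f a := by
  have hm : MonotoneOn f (Set.Ici 0) := by
    apply monotoneOn_of_deriv_nonneg (convex_Ici 0)
    · exact fun x _ => (hf x).continuousAt.continuousWithinAt
    · exact fun x _ => (hf x).differentiableAt.differentiableWithinAt
    · intro x hx
      rw [interior_Ici] at hx
      rw [(hf x).deriv]
      exact hn x (le_of_lt hx)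
  have := hm (Set.mem_Ici.2 le_rfl) (Set.mem_Ici.2 ha) ha
  rwa [h0] at this

theorem key_aux (r μ a : ℝ) (hr : 0 < r) (hμ : 0 < μ) (ha : 0 ≤ a) :
    0 ≤ (r + 2 * μ) * Real.exp (r * a) - (r + 2 * μ) - r * (r + μ) * a := by
  have h1 := Real.add_one_le_exp (r * a)
  have h2 : (r + 2 * μ) * (r * a + 1) ≤ (r + 2 * μ) * Real.exp (r * a) := by gcongr
  have h3 : 0 ≤ μ * r * a := by positivity
  nlinarith

theorem hexp_aux (k x : ℝ) :
    HasDerivAt (fun y : ℝ => Real.exp (k * y)) (k * Real.exp (k * x)) x := by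
  have h := ((hasDerivAt_id x).const_mul k).exp
  simp only [id, mul_one] at h
  rwa [mul_comm] at h

theorem G_aux (r μ : ℝ) (hr : 0 < r) (hμ : 0 < μ) (hne : r ≠ μ) (a : ℝ) (ha : 0 ≤ a) :
    0 ≤ (r * (r + μ) * a + (r^2 + 2*r*μ + 2*μ^2)/μ) * Real.exp (-μ * a)
      + (r*μ + 2*μ^2)/(r-μ) * (Real.exp ((r-μ)*a) - 1) - (r^2 + 2*r*μ + 2*μ^2)/μ := by
  have hd : r - μ ≠ 0 := sub_ne_zero.2 hne
  refine mono_aux (fun a => (r * (r + μ) * a + (r^2 + 2*r*μ + 2*μ^2)/μ) * Real.exp (-μ * a)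
      + (r*μ + 2*μ^2)/(r-μ) * (Real.exp ((r-μ)*a) - 1) - (r^2 + 2*r*μ + 2*μ^2)/μ)
    (fun a => μ * Real.exp (-μ * a) *
      ((r + 2 * μ) * Real.exp (r * a) - (r + 2 * μ) - r * (r + μ) * a)) ?_ ?_ ?_ a ha
  · intro x
    have h := ((((((hasDerivAt_id x).const_mul (r * (r + μ))).add_const
      ((r^2 + 2*r*μ + 2*μ^2)/μ)).mul (hexp_aux (-μ) x)).add
      (((hexp_aux (r-μ) x).sub_const 1).const_mul ((r*μ + 2*μ^2)/(r-μ))))).sub_const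
      ((r^2 + 2*r*μ + 2*μ^2)/μ)
    refine h.congr_deriv ?_
    have e : Real.exp ((r-μ)*x) = Real.exp (-μ * x) * Real.exp (r*x) := by
      rw [← Real.exp_add]; congr 1; ring
    simp only [id, e]
    field_simp
    ring
  · simp
  · intro x hx
    have := key_aux r μ x hr hμ hx
    positivity

theorem K_aux (r μ : ℝ) (hr : 0 < r) (hμ : 0 < μ) (a : ℝ) (ha : 0 ≤ a) :
    0 ≤ (3*μ + 2*r + r*(r+μ)*a) * Real.exp (-r * a) - (3*μ+2*r) + r*(r+2*μ)*a := by
  refine mono_aux (fun a => (r*(r+μ)*a + (3*μ + 2*r)) * Real.exp (-r * a) - (3*μ+2*r)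
      + r*(r+2*μ)*a)
    (fun a => r * Real.exp (-r * a) *
      ((r + 2 * μ) * Real.exp (r * a) - (r + 2 * μ) - r * (r + μ) * a)) ?_ ?_ ?_ a ha |>.trans_eq ?_
  · intro x
    have h := (((((hasDerivAt_id x).const_mul (r * (r + μ))).add_const
      (3*μ + 2*r)).mul (hexp_aux (-r) x)).sub_const (3*μ+2*r)).add
      ((hasDerivAt_id x).const_mul (r*(r+2*μ)))
    refine h.congr_deriv ?_
    have e : Real.exp (-r * x) * Real.exp (r*x) = 1 := by
      rw [← Real.exp_add]; simp
    simp only [id]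
    linear_combination (-r * (r + 2*μ)) * e
  · simp
  · intro x hx
    have := key_aux r μ x hr hμ hx
    positivity
  · ring

theorem PhiL_nonneg (r μ : ℝ) (hr : 0 < r) (hμ : 0 < μ) (hne : r ≠ μ) :
    ∀ a : ℝ, 0 ≤ a → 0 ≤ PhiL r μ a := by
  intro a ha
  have hd : r - μ ≠ 0 := sub_ne_zero.2 hne
  have hG := G_aux r μ hr hμ hne a ha
  have hK := K_aux r μ hr hμ a ha
  have e1 : Real.exp (-(r + μ) * a) = Real.exp (-r * a) * Real.exp (-μ * a) := by
    rw [← Real.exp_add]; congr 1; ring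
  have e2 : Real.exp (-μ * a) = Real.exp (-r * a) * Real.exp ((r-μ) * a) := by
    rw [← Real.exp_add]; congr 1; ring
  have key : PhiL r μ a = Real.exp (-r * a) *
      ((r * (r + μ) * a + (r^2 + 2*r*μ + 2*μ^2)/μ) * Real.exp (-μ * a)
      + (r*μ + 2*μ^2)/(r-μ) * (Real.exp ((r-μ)*a) - 1) - (r^2 + 2*r*μ + 2*μ^2)/μ) * (μ / (r + μ))
      + (μ^2 / r^2) * (Real.exp (-μ * a) *
      ((3*μ + 2*r + r*(r+μ)*a) * Real.exp (-r * a) - (3*μ+2*r) + r*(r+2*μ)*a)) * (r / (r + μ)) := by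
    unfold PhiL
    rw [e1]
    congr 1
    · congr 1
      have c1 : (2 * μ^3 - r^3 - r^2 * μ) / (μ * (r - μ)) = -((r^2 + 2*r*μ + 2*μ^2)/μ) := by
        field_simp
        ring
      have c2 : (r * μ * (r + μ) + r^3) / (μ * (r - μ))
          = (r*μ + 2*μ^2)/(r-μ) + (r^2 + 2*r*μ + 2*μ^2)/μ := by
        field_simp
        ring
      rw [c1, c2]
      linear_combination ((r*μ + 2*μ^2)/(r-μ)) * e2
    · ring
  rw [key]
  positivity
end

section
/- Let r > 0 and μ > 0 be real numbers with r ≠ μ. The mean of the preemptive LCFS M/M/1/2* peak-age-of-information density equals the average peak AoI per queue given in the paper: ∫₀^∞ a · Φ_L(a) da = 1/r + 1/μ + r/(r+μ)² + r/(μ(r+μ)). -/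
theorem moment_aux (n : ℕ) (c : ℝ) (hc : 0 < c) :
    MeasureTheory.IntegrableOn (fun a : ℝ => a ^ n * Real.exp (-c * a)) (Set.Ioi 0) ∧
    ∫ a in Set.Ioi (0:ℝ), a ^ n * Real.exp (-c * a) = n.factorial / c ^ (n + 1) := by
  constructor
  · have h := integrableOn_rpow_mul_exp_neg_mul_rpow (p := 1) (s := n) (b := c)
      (by have : (0:ℝ) ≤ n := Nat.cast_nonneg n
          linarith) one_pos hc
    simpa using h
  · have h := Real.integral_rpow_mul_exp_neg_mul_Ioi (a := (n:ℝ) + 1) (r := c)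
      (by positivity) hc
    rw [Real.Gamma_nat_eq_factorial] at h
    have e : (1 / c) ^ ((n:ℝ) + 1) = 1 / c ^ (n + 1) := by
      rw [← Nat.cast_succ, Real.rpow_natCast, one_div_pow]
    rw [e] at h
    simp only [add_sub_cancel_right, Real.rpow_natCast] at h
    simp only [neg_mul]
    rw [h]
    ring

theorem PhiL_mean (r μ : ℝ) (hr : 0 < r) (hμ : 0 < μ) (hne : r ≠ μ) :
    ∫ a in Set.Ioi (0:ℝ), a * PhiL r μ a
      = 1/r + 1/μ + r/(r + μ)^2 + r/(μ * (r + μ)) := by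
  have hs : 0 < r + μ := by positivity
  have hd : r - μ ≠ 0 := sub_ne_zero.mpr hne
  obtain ⟨i1, j1⟩ := moment_aux 1 (r + μ) hs
  obtain ⟨i2, j2⟩ := moment_aux 2 (r + μ) hs
  obtain ⟨i3, j3⟩ := moment_aux 1 μ hμ
  obtain ⟨i4, j4⟩ := moment_aux 2 μ hμ
  obtain ⟨i5, j5⟩ := moment_aux 1 r hr
  have key : ∀ A B C D E : ℝ, ∫ a in Set.Ioi (0:ℝ),
      (A * (a ^ 1 * Real.exp (-(r + μ) * a)) + B * (a ^ 2 * Real.exp (-(r + μ) * a))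
        + C * (a ^ 1 * Real.exp (-μ * a)) + D * (a ^ 2 * Real.exp (-μ * a))
        + E * (a ^ 1 * Real.exp (-r * a)))
      = A * (1 / (r + μ) ^ 2) + B * (2 / (r + μ) ^ 3) + C * (1 / μ ^ 2) + D * (2 / μ ^ 3)
        + E * (1 / r ^ 2) := by
    intro A B C D E
    have k1 := i1.const_mul A
    have k2 := i2.const_mul B
    have k3 := i3.const_mul C
    have k4 := i4.const_mul D
    have k5 := i5.const_mul E
    rw [MeasureTheory.integral_add (by exact ((k1.add k2).add k3).add k4) k5,
      MeasureTheory.integral_add (by exact (k1.add k2).add k3) k4,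
      MeasureTheory.integral_add (by exact k1.add k2) k3,
      MeasureTheory.integral_add k1 k2]
    simp only [MeasureTheory.integral_const_mul]
    rw [j1, j2, j3, j4, j5]
    norm_num [Nat.factorial]
  have e := key
    (-((2 * μ^3 - r^3 - r^2 * μ) / (μ * (r - μ))) * (μ / (r + μ))
      + (μ^2 / r^2) * (3 * μ + 2 * r) * (r / (r + μ)))
    (r * (r + μ) * (μ / (r + μ)) + (μ^2 / r^2) * (r * (r + μ)) * (r / (r + μ)))
    (((r * μ + 2 * μ^2) / (r - μ)) * (μ / (r + μ))
      - (μ^2 / r^2) * (3 * μ + 2 * r) * (r / (r + μ)))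
    ((μ^2 / r^2) * (r * (r + 2 * μ)) * (r / (r + μ)))
    (-((r * μ * (r + μ) + r^3) / (μ * (r - μ))) * (μ / (r + μ)))
  have f : ∀ x y : ℝ, (∫ a in Set.Ioi (0:ℝ), a * PhiL r μ a) = x → x = y →
      (∫ a in Set.Ioi (0:ℝ), a * PhiL r μ a) = y := fun x y h1 h2 => h1.trans h2
  refine f _ _ (Eq.trans ?_ e) ?_
  · congr 1
    funext a
    unfold PhiL
    generalize Real.exp (-(r + μ) * a) = X
    generalize Real.exp (-μ * a) = Y
    generalize Real.exp (-r * a) = Z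
    generalize (2 * μ^3 - r^3 - r^2 * μ) / (μ * (r - μ)) = c1
    generalize (r * μ + 2 * μ^2) / (r - μ) = c2
    generalize (r * μ * (r + μ) + r^3) / (μ * (r - μ)) = c3
    generalize μ / (r + μ) = c4
    generalize r / (r + μ) = c5
    generalize μ^2 / r^2 = c6
    ring
  · field_simp
    ring
end
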